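/- Let C = {(x,y) ∈ ℝ² : 1 ≤ x and |y| ≤ 1 − 1/x}, a closed unbounded subset of ℝ², and let D̄ be the closed unit disk {(x,y) : x² + y² ≤ 1}. Then: (a) for every ε > 0 there exists a rigid motion σ of ℝ² with σ(D̄) ⊆ (1+ε)C = {(1+ε)z : z ∈ C}; but (b) there is no rigid motion σ of ℝ² with σ(D̄) ⊆ C. (Hence the compactness hypothesis in the homothety packing theorem cannot be weakened to closedness.) -/

import Mathlib

/-!
Part (a): far to the right, `(1 + ε)C` has half-width close to `1 + ε`, so the unit disk
translated along the first axis by `T = 2 + ε + (1 + ε)² / ε` fits.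

Part (b): the image of the disk contains `ξ + e₂` and `ξ - e₂`, whose second coordinates differ
by `2`, whereas every point of `C` has second coordinate strictly between `-1` and `1`.
-/


open Pointwise

noncomputable section

/-- The rigid motion `(θ, ξ)` acting on a point of `ℝ²`: `x ↦ ξ + θx`. -/
def rmApply (θ : Matrix (Fin 2) (Fin 2) ℝ) (ξ : EuclideanSpace ℝ (Fin 2))
    (x : EuclideanSpace ℝ (Fin 2)) : EuclideanSpace ℝ (Fin 2) :=
  ξ + (EuclideanSpace.equiv (Fin 2) ℝ).symm (θ.mulVec (EuclideanSpace.equiv (Fin 2) ℝ x))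

/-- The closed unbounded region `{(x, y) : 1 ≤ x, |y| ≤ 1 − 1/x}` of `ℝ²`. -/
def hornRegion : Set (EuclideanSpace ℝ (Fin 2)) :=
  {p | 1 ≤ p 0 ∧ |p 1| ≤ 1 - 1 / p 0}

theorem abs_snd_lt_one_of_mem_hornRegion {p : EuclideanSpace ℝ (Fin 2)} (hp : p ∈ hornRegion) :
    |p 1| < 1 := by
  obtain ⟨h0, h1⟩ := hp
  have : 0 < 1 / p 0 := by positivity
  linarith

/-- A rigid motion maps the closed unit disk onto the closed unit disk around `ξ`; only this
inclusion is needed. The preimage of `ξ + v` is `θᵀ v`. -/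
theorem add_mem_rmApply_image {θ : Matrix (Fin 2) (Fin 2) ℝ}
    (hθ : θ ∈ Matrix.orthogonalGroup (Fin 2) ℝ) (ξ v : EuclideanSpace ℝ (Fin 2))
    (hv : ‖v‖ ≤ 1) :
    ξ + v ∈ rmApply θ ξ '' Metric.closedBall (0 : EuclideanSpace ℝ (Fin 2)) 1 := by
  have hmul : θ * θ.transpose = 1 := Matrix.mem_orthogonalGroup_iff _ _ |>.1 hθ
  refine ⟨WithLp.toLp 2 (θ.transpose.mulVec v.ofLp), ?_, ?_⟩
  · rw [mem_closedBall_zero_iff, ← sq_le_one_iff₀ (norm_nonneg _), EuclideanSpace.real_norm_sq_eq]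
    rw [← sq_le_one_iff₀ (norm_nonneg _), EuclideanSpace.real_norm_sq_eq] at hv
    have key : ∀ w : Fin 2 → ℝ, ∑ i, w i ^ 2 = w ⬝ᵥ w := fun w => by
      simp [dotProduct, sq]
    rw [key] at hv ⊢
    rw [Matrix.dotProduct_mulVec, Matrix.vecMul_transpose, Matrix.mulVec_mulVec, hmul,
      Matrix.one_mulVec]
    exact hv
  · have h : θ.mulVec (θ.transpose.mulVec v.ofLp) = v.ofLp := by
      rw [Matrix.mulVec_mulVec, hmul, Matrix.one_mulVec]
    change ξ + WithLp.toLp 2 (θ.mulVec (θ.transpose.mulVec v.ofLp)) = ξ + v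
    rw [h]

/-- **The counterexample showing compactness cannot be weakened to closedness.** For the
closed unbounded set `C = {(x, y) : 1 ≤ x, |y| ≤ 1 − 1/x}` and the closed unit disk `D̄`:
(a) for every `ε > 0` some rigid motion carries `D̄` into `(1 + ε)C`, but (b) no rigid
motion carries `D̄` into `C`. -/
theorem closed_unbounded_counterexample :
    (∀ ε : ℝ, 0 < ε →
      ∃ (θ : Matrix (Fin 2) (Fin 2) ℝ) (ξ : EuclideanSpace ℝ (Fin 2)),
        θ ∈ Matrix.orthogonalGroup (Fin 2) ℝ ∧
        rmApply θ ξ '' Metric.closedBall (0 : EuclideanSpace ℝ (Fin 2)) 1 ⊆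
          (1 + ε) • hornRegion) ∧
    ¬ ∃ (θ : Matrix (Fin 2) (Fin 2) ℝ) (ξ : EuclideanSpace ℝ (Fin 2)),
        θ ∈ Matrix.orthogonalGroup (Fin 2) ℝ ∧
        rmApply θ ξ '' Metric.closedBall (0 : EuclideanSpace ℝ (Fin 2)) 1 ⊆
          hornRegion := by
  constructor
  · intro ε hε
    refine ⟨1, !₂[2 + ε + (1 + ε) ^ 2 / ε, 0], one_mem _, ?_⟩
    rintro _ ⟨x, hx, rfl⟩
    rw [mem_closedBall_zero_iff] at hx
    have hx0 : |x 0| ≤ 1 := (PiLp.norm_apply_le x 0).trans hx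
    have hx1 : |x 1| ≤ 1 := (PiLp.norm_apply_le x 1).trans hx
    have hpos : 0 < 1 + ε := by linarith
    have hx0' := (abs_le.1 hx0).1
    have hq : 0 < (1 + ε) ^ 2 / ε := by positivity
    set u : ℝ := 2 + ε + (1 + ε) ^ 2 / ε + x 0 with hu
    have hu1 : 1 + ε ≤ u := by linarith
    have hu2 : (1 + ε) ^ 2 / ε ≤ u := by linarith
    have hu3 : (1 + ε) ^ 2 / u ≤ ε := by
      rw [div_le_iff₀ hε] at hu2
      rw [div_le_iff₀ (by linarith)]
      linarith
    rw [Set.mem_smul_set_iff_inv_smul_mem₀ hpos.ne']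
    have e0 : ((1 + ε)⁻¹ • rmApply 1 !₂[2 + ε + (1 + ε) ^ 2 / ε, 0] x) 0 = u / (1 + ε) := by
      simp [rmApply, hu]
      ring
    have e1 : ((1 + ε)⁻¹ • rmApply 1 !₂[2 + ε + (1 + ε) ^ 2 / ε, 0] x) 1 = x 1 / (1 + ε) := by
      simp [rmApply]
      ring
    refine ⟨?_, ?_⟩
    · rw [e0, le_div_iff₀ hpos]
      linarith
    · rw [e0, e1, abs_div, abs_of_pos hpos, div_le_iff₀ hpos, one_div_div, sub_mul]
      have : (1 + ε) / u * (1 + ε) = (1 + ε) ^ 2 / u := by ring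
      linarith
  · rintro ⟨θ, ξ, hθ, hsub⟩
    have hn : ‖EuclideanSpace.single (1 : Fin 2) (1 : ℝ)‖ ≤ 1 := by simp
    have hup := abs_snd_lt_one_of_mem_hornRegion (hsub (add_mem_rmApply_image hθ ξ _ hn))
    have hdown := abs_snd_lt_one_of_mem_hornRegion
      (hsub (add_mem_rmApply_image hθ ξ _ ((norm_neg _).trans_le hn)))
    simp only [PiLp.add_apply, PiLp.neg_apply, PiLp.single_apply, if_true] at hup hdown
    linarith [(abs_lt.1 hup).2, (abs_lt.1 hdown).1]
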